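/- arXiv:1604.04809 — 2 statements merged into one kernel-verified Lean document; each statement's English description precedes it below -/
import Mathlib

section
/- There is a constant c (independent of the game) such that every coordination game on a weighted simple cycle on n nodes in which at most two nodes have a non-zero bonus admits, from every joint strategy, a finite improvement path of length at most c·n (hence ending in a Nash equilibrium). -/
open scoped Classical

namespace CG

/-- Payoff of node `i` in a coordination game on a weighted directed graph
with adjacency `adj` (an edge `j → i` is `adj j i`), edge weights `w`,
bonuses `β`, under the joint strategy `s`. -/
noncomputable def payoff {V M : Type} [Fintype V] (adj : V → V → Prop)
    (w : V → V → ℝ) (β : V → M → ℕ) (s : V → M) (i : V) : ℝ :=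
  (∑ j ∈ Finset.univ.filter (fun j => adj j i ∧ s j = s i), w j i) + (β i (s i) : ℝ)

/-- A joint strategy assigns to every node a colour from its colour set. -/
def Valid {V M : Type} (C : V → Finset M) (s : V → M) : Prop :=
  ∀ i, s i ∈ C i

/-- `s'` is a profitable deviation of the (non-empty) coalition
`K = {i | s i ≠ s' i}` from `s`. -/
def ProfDev {V M : Type} [Fintype V] (adj : V → V → Prop) (w : V → V → ℝ)
    (β : V → M → ℕ) (C : V → Finset M) (s s' : V → M) : Prop :=
  Valid C s' ∧ s ≠ s' ∧
    ∀ i, s i ≠ s' i → payoff adj w β s i < payoff adj w β s' i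

/-- A profitable deviation of a single player. -/
def UniDev {V M : Type} [Fintype V] (adj : V → V → Prop) (w : V → V → ℝ)
    (β : V → M → ℕ) (C : V → Finset M) (s s' : V → M) : Prop :=
  ProfDev adj w β C s s' ∧ ∃ i, ∀ j, j ≠ i → s j = s' j

/-- A Nash equilibrium: no single player has a profitable deviation. -/
def IsNash {V M : Type} [Fintype V] (adj : V → V → Prop) (w : V → V → ℝ)
    (β : V → M → ℕ) (C : V → Finset M) (s : V → M) : Prop :=
  Valid C s ∧ ∀ s', ¬ UniDev adj w β C s s'

/-- A strong equilibrium: no coalition has a profitable deviation. -/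
def IsStrong {V M : Type} [Fintype V] (adj : V → V → Prop) (w : V → V → ℝ)
    (β : V → M → ℕ) (C : V → Finset M) (s : V → M) : Prop :=
  Valid C s ∧ ∀ s', ¬ ProfDev adj w β C s s'

/-- There is a finite improvement path of length `L` starting at `s`
(each step a profitable single-player deviation) ending in a Nash equilibrium. -/
def ImpPath {V M : Type} [Fintype V] (adj : V → V → Prop) (w : V → V → ℝ)
    (β : V → M → ℕ) (C : V → Finset M) (s : V → M) (L : ℕ) : Prop :=
  ∃ σ : ℕ → V → M, σ 0 = s ∧
    (∀ t, t < L → UniDev adj w β C (σ t) (σ (t + 1))) ∧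
    IsNash adj w β C (σ L)

/-- There is a finite c-improvement path of length `L` starting at `s`
(each step a profitable coalition deviation) ending in a strong equilibrium. -/
def CImpPath {V M : Type} [Fintype V] (adj : V → V → Prop) (w : V → V → ℝ)
    (β : V → M → ℕ) (C : V → Finset M) (s : V → M) (L : ℕ) : Prop :=
  ∃ σ : ℕ → V → M, σ 0 = s ∧
    (∀ t, t < L → ProfDev adj w β C (σ t) (σ (t + 1))) ∧
    IsStrong adj w β C (σ L)

/-- Adjacency of the simple cycle `1 → 2 → ⋯ → n → 1` on `Fin n`. -/
def cycAdj (n : ℕ) : Fin n → Fin n → Prop :=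
  fun i j => (i.val + 1) % n = j.val

/-!
Let the nodes respond in cyclic order. A responding node keeps its colour if that is a best
response to the colour `x` of its predecessor; otherwise it switches to `x` if `x` is a best
response, and to a fixed colour of maximal bonus if not. As soon as some node keeps its colour
after a full round, the strategy is a Nash equilibrium. Until then every node switches: a node
without bonus copies its predecessor, so a round acts on the travelling colour as `g ∘ f`, where
`f` and `g` belong to the two nodes with bonuses and each of them leaves a colour unchanged or
sends it to one fixed value. Such a composition satisfies `(g ∘ f)^[3] = (g ∘ f)^[2]`, so some
node must keep its colour within five rounds.
-/

section BestResponse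

variable {M : Type*}

/-- The payoff of colour `c` at a node with bonuses `b` and a single incoming edge, of weight `ω`,
whose source plays `x`. -/
noncomputable def responsePayoff (ω : ℝ) (b : M → ℝ) (x c : M) : ℝ :=
  (if x = c then ω else 0) + b c

/-- The colour `c` maximizes `responsePayoff ω b x` over the set `S` of available colours. -/
def IsBestResponse (ω : ℝ) (b : M → ℝ) (S : Set M) (x c : M) : Prop :=
  c ∈ S ∧ ∀ z ∈ S, responsePayoff ω b x z ≤ responsePayoff ω b x c

/-- The colour `x` if it is a best response to itself, and otherwise the fallback `y`, meant to be
a colour of maximal bonus, so that the result is always a best response to `x`. -/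
noncomputable def copyOrDefault (ω : ℝ) (b : M → ℝ) (S : Set M) (y x : M) : M :=
  if IsBestResponse ω b S x x then x else y

/-- A best response to `x` of a node whose current colour is `c`: it moves, by `copyOrDefault`,
only when `c` is not a best response. -/
noncomputable def lazyResponse (ω : ℝ) (b : M → ℝ) (S : Set M) (y x c : M) : M :=
  if IsBestResponse ω b S x c then c else copyOrDefault ω b S y x

variable {ω : ℝ} {b : M → ℝ} {S : Set M} {x y c : M}

theorem responsePayoff_of_ne (h : x ≠ c) : responsePayoff ω b x c = b c := by
  simp only [responsePayoff, if_neg h, zero_add]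

theorem bonus_le_responsePayoff (hω : 0 ≤ ω) : b c ≤ responsePayoff ω b x c := by
  unfold responsePayoff
  split_ifs <;> linarith

theorem exists_responsePayoff_lt (hc : c ∈ S) (h : ¬ IsBestResponse ω b S x c) :
    ∃ z ∈ S, responsePayoff ω b x c < responsePayoff ω b x z := by
  by_contra! hmax
  exact h ⟨hc, hmax⟩

theorem isBestResponse_copyOrDefault (hω : 0 ≤ ω) (hyS : y ∈ S) (hy : ∀ z ∈ S, b z ≤ b y) :
    IsBestResponse ω b S x (copyOrDefault ω b S y x) := by
  by_cases hx : IsBestResponse ω b S x x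
  · rwa [copyOrDefault, if_pos hx]
  rw [copyOrDefault, if_neg hx]
  have le_of_ne : ∀ z ∈ S, x ≠ z → responsePayoff ω b x z ≤ responsePayoff ω b x y :=
    fun z hz hxz => calc
      responsePayoff ω b x z = b z := responsePayoff_of_ne hxz
      _ ≤ b y := hy z hz
      _ ≤ responsePayoff ω b x y := bonus_le_responsePayoff hω
  refine ⟨hyS, fun z hz => ?_⟩
  rcases eq_or_ne x z with rfl | hxz
  · obtain ⟨z', hz', hlt⟩ := exists_responsePayoff_lt hz hx
    have hxz' : x ≠ z' := by
      rintro rfl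
      exact hlt.false
    exact hlt.le.trans (le_of_ne z' hz' hxz')
  · exact le_of_ne z hz hxz

theorem isBestResponse_lazyResponse (hω : 0 ≤ ω) (hyS : y ∈ S) (hy : ∀ z ∈ S, b z ≤ b y) :
    IsBestResponse ω b S x (lazyResponse ω b S y x c) := by
  unfold lazyResponse
  split_ifs with h
  · exact h
  · exact isBestResponse_copyOrDefault hω hyS hy

theorem copyOrDefault_eq_or : copyOrDefault ω b S y x = x ∨ copyOrDefault ω b S y x = y :=
  ite_eq_or_eq ..

theorem lazyResponse_eq_or :
    lazyResponse ω b S y x c = c ∨ lazyResponse ω b S y x c = copyOrDefault ω b S y x :=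
  ite_eq_or_eq ..

theorem isBestResponse_self_of_constant_bonus (hω : 0 ≤ ω) (hb : ∀ z ∈ S, ∀ z' ∈ S, b z = b z')
    (hc : c ∈ S) (h : ¬ IsBestResponse ω b S x c) : IsBestResponse ω b S x x := by
  obtain ⟨z, hz, hlt⟩ := exists_responsePayoff_lt hc h
  obtain rfl : x = z := by
    by_contra hxz
    rw [responsePayoff_of_ne hxz, hb z hz c hc] at hlt
    exact (bonus_le_responsePayoff hω).not_gt hlt
  refine ⟨hz, fun z hz' => ?_⟩
  rcases eq_or_ne x z with rfl | hxz
  · exact le_rfl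
  · rw [responsePayoff_of_ne hxz, hb z hz' x hz]
    exact bonus_le_responsePayoff hω

theorem lazyResponse_eq_or_of_constant_bonus (hω : 0 ≤ ω)
    (hb : ∀ z ∈ S, ∀ z' ∈ S, b z = b z') (hc : c ∈ S) :
    lazyResponse ω b S y x c = c ∨ lazyResponse ω b S y x c = x := by
  by_cases h : IsBestResponse ω b S x c
  · exact .inl (if_pos h)
  · have hx := isBestResponse_self_of_constant_bonus hω hb hc h
    exact .inr ((if_neg h).trans (if_pos hx))

theorem responsePayoff_lt_lazyResponse (hω : 0 ≤ ω) (hyS : y ∈ S) (hy : ∀ z ∈ S, b z ≤ b y)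
    (hc : c ∈ S) (hmove : lazyResponse ω b S y x c ≠ c) :
    responsePayoff ω b x c < responsePayoff ω b x (lazyResponse ω b S y x c) := by
  have hnot : ¬ IsBestResponse ω b S x c := fun h => hmove (if_pos h)
  obtain ⟨z, hz, hlt⟩ := exists_responsePayoff_lt hc hnot
  exact hlt.trans_le ((isBestResponse_lazyResponse hω hyS hy).2 z hz)

end BestResponse

section Game

variable {V M : Type} [Fintype V] {adj : V → V → Prop} {w : V → V → ℝ} {β : V → M → ℕ}
  {C : V → Finset M} {s : V → M}

theorem uniDev_update [DecidableEq V] {i : V} {c : M} (hs : Valid C s) (hc : c ∈ C i)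
    (hlt : payoff adj w β s i < payoff adj w β (Function.update s i c) i) :
    UniDev adj w β C s (Function.update s i c) := by
  refine ⟨⟨?_, ?_, ?_⟩, i, fun j hj => (Function.update_of_ne hj c s).symm⟩
  · exact (Function.forall_update_iff s fun j d => d ∈ C j).2 ⟨hc, fun j _ => hs j⟩
  · intro h
    exact hlt.ne (congrArg (payoff adj w β · i) h)
  · intro j hj
    obtain rfl : j = i := by
      by_contra hji
      exact hj (Function.update_of_ne hji c s).symm
    exact hlt

theorem isNash_of_forall_payoff_update_le [DecidableEq V] (hs : Valid C s)
    (hmax : ∀ i, ∀ c ∈ C i, payoff adj w β (Function.update s i c) i ≤ payoff adj w β s i) :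
    IsNash adj w β C s := by
  refine ⟨hs, ?_⟩
  rintro s' ⟨⟨hs', hne, hlt⟩, i, hi⟩
  have hs'_eq : s' = Function.update s i (s' i) :=
    Function.eq_update_iff.2 ⟨rfl, fun j hj => (hi j hj).symm⟩
  have hsi : s i ≠ s' i := fun h => hne (by rw [hs'_eq, ← h, Function.update_eq_self])
  have hle := hmax i (s' i) (hs' i)
  rw [← hs'_eq] at hle
  exact hle.not_gt (hlt i hsi)

theorem exists_impPath_of_lazy_sequence (T : ℕ) (τ : ℕ → V → M)
    (hstep : ∀ t, τ (t + 1) = τ t ∨ UniDev adj w β C (τ t) (τ (t + 1)))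
    (hT : IsNash adj w β C (τ T)) : ∃ L ≤ T, ImpPath adj w β C (τ 0) L := by
  induction T generalizing τ with
  | zero => exact ⟨0, le_rfl, τ, rfl, fun t ht => absurd ht t.not_lt_zero, hT⟩
  | succ T ih =>
    obtain ⟨L, hL, σ, hσ0, hσ, hNash⟩ := ih (fun t => τ (t + 1)) (fun t => hstep (t + 1)) hT
    rcases hstep 0 with heq | hdev
    · exact ⟨L, hL.trans T.le_succ, σ, hσ0.trans heq, hσ, hNash⟩
    · refine ⟨L + 1, Nat.succ_le_succ hL, fun t => Nat.casesOn t (τ 0) σ, rfl, ?_, hNash⟩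
      rintro (_ | t) ht
      · rwa [← hσ0] at hdev
      · exact hσ t (Nat.lt_of_succ_lt_succ ht)

end Game

theorem iterate_three_comp_eq_iterate_two {M : Type*} {f g : M → M} {a b : M}
    (hf : ∀ x, f x = x ∨ f x = a) (hg : ∀ x, g x = x ∨ g x = b) (x : M) :
    (g ∘ f)^[3] x = (g ∘ f)^[2] x := by
  have hfa : f a = a := (hf a).elim id id
  have hgb : g b = b := (hg b).elim id id
  have ha : g (f (g (f a))) = g (f a) := by
    rcases hg a with hga | hga
    · simp only [hfa, hga]
    · rcases hf b with hfb | hfb <;> simp only [hfa, hfb, hga, hgb]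
  have hb : g (f (g (f b))) = g (f b) := by
    rcases hf b with hfb | hfb
    · simp only [hfb, hgb]
    · rcases hg a with hga | hga <;> simp only [hfa, hfb, hga]
  have hx : g (f x) = x ∨ g (f x) = a ∨ g (f x) = b := by
    rcases hg (f x) with hgfx | hgfx
    · rw [hgfx]
      exact (hf x).imp_right .inl
    · exact .inr (.inr hgfx)
  change g (f (g (f (g (f x))))) = g (f (g (f x)))
  rcases hx with h | h | h
  · simp only [h]
  · rw [h, ha]
  · rw [h, hb]

open scoped Fin.CommRing

section RoundRobin

variable {n : ℕ} [NeZero n]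

theorem natCast_add_period (t : ℕ) : ((t + n : ℕ) : Fin n) = t := by
  rw [Nat.cast_add, Fin.natCast_self, add_zero]

theorem natCast_ne_natCast_of_lt {t r : ℕ} (htr : t < r) (hrt : r < t + n) :
    (r : Fin n) ≠ (t : Fin n) := by
  intro h
  have hdvd : n ∣ r - t := by
    rw [← Fin.natCast_eq_zero, Nat.cast_sub htr.le, h, sub_self]
  have := Nat.le_of_dvd (Nat.sub_pos_of_lt htr) hdvd
  omega

theorem exists_between_natCast_eq (i : Fin n) (t : ℕ) :
    ∃ r, t ≤ r ∧ r < t + n ∧ (r : Fin n) = i := by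
  refine ⟨t + (i - t : Fin n).val, Nat.le_add_right .., Nat.add_lt_add_left (i - t).isLt t, ?_⟩
  rw [Nat.cast_add, Fin.cast_val_eq_self, add_sub_cancel]

variable {M : Type*}

/-- The strategies that arise from `s` when the nodes `0, 1, …, n - 1, 0, …` of the cycle respond in
turn; `R i x c` is the response of node `i` with colour `c` to its predecessor's colour `x`. -/
def roundRobin (R : Fin n → M → M → M) (s : Fin n → M) : ℕ → Fin n → M
  | 0 => s
  | t + 1 => Function.update (roundRobin R s t) t
      (R t (roundRobin R s t (t - 1)) (roundRobin R s t t))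

/-- The colour that the node responding at time `t` has just before its response. -/
def turnColour (R : Fin n → M → M → M) (s : Fin n → M) (t : ℕ) : M :=
  roundRobin R s t t

variable {R : Fin n → M → M → M} {s : Fin n → M}

theorem roundRobin_eq_of_forall_ne {i : Fin n} {t r : ℕ} (htr : t ≤ r)
    (hi : ∀ k, t ≤ k → k < r → (k : Fin n) ≠ i) : roundRobin R s t i = roundRobin R s r i := by
  induction r, htr using Nat.le_induction with
  | base => rfl
  | succ r htr ih =>
    rw [ih fun k hk hkr => hi k hk (hkr.trans r.lt_succ_self), roundRobin,
      Function.update_of_ne (hi r htr r.lt_succ_self).symm]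

theorem roundRobin_apply_natCast {t r : ℕ} (htr : t ≤ r) (hrt : r < t + n) :
    roundRobin R s t r = turnColour R s r :=
  roundRobin_eq_of_forall_ne htr fun _ htk hkr =>
    (natCast_ne_natCast_of_lt hkr (by omega)).symm

theorem turnColour_add (t : ℕ) :
    turnColour R s (t + n) = R t (turnColour R s (t + n - 1)) (turnColour R s t) := by
  have hn : 0 < n := NeZero.pos n
  have hpred : ((t + n - 1 : ℕ) : Fin n) = t - 1 := by
    rw [Nat.cast_pred (by omega), natCast_add_period]
  rw [← roundRobin_apply_natCast (t := t + 1) (by omega) (by omega), natCast_add_period,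
    roundRobin, Function.update_self, ← hpred, roundRobin_apply_natCast (by omega) (by omega)]
  rfl

theorem roundRobin_of_turnColour_add_eq {Q : Fin n → M → M → Prop}
    (hQ : ∀ i x c, Q i x (R i x c)) {t : ℕ} (hnt : n ≤ t)
    (ht : turnColour R s (t + n) = turnColour R s t) (i : Fin n) :
    Q i (roundRobin R s t (i - 1)) (roundRobin R s t i) := by
  obtain ⟨r, htr, hrt, rfl⟩ := exists_between_natCast_eq i (t + 1)
  have hpred : roundRobin R s t (r - 1) = turnColour R s (r - 1) := by
    rw [← Nat.cast_pred (by omega), roundRobin_apply_natCast (by omega) (by omega)]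
  have hself : roundRobin R s t r = turnColour R s r := by
    rcases (Nat.lt_succ_iff.1 (by omega : r < t + n + 1)).lt_or_eq with hlt | rfl
    · exact roundRobin_apply_natCast (by omega) hlt
    · rw [ht, natCast_add_period, turnColour]
  obtain ⟨m, rfl⟩ := Nat.exists_eq_add_of_le' (by omega : n ≤ r)
  rw [hpred, hself, turnColour_add, natCast_add_period]
  exact hQ _ _ _

end RoundRobin

section TravellingColour

variable {M : Type*} {u : ℕ → M}

theorem eq_apply_of_forall_between_eq_id {F : ℕ → M → M} {m l : ℕ} (hml : m < l)
    (hu : ∀ k, m ≤ k → k < l → u (k + 1) = F (k + 1) (u k))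
    (hid : ∀ k, m < k → k < l → F k = id) : u l = F l (u m) := by
  induction l, hml using Nat.le_induction with
  | base => exact hu m le_rfl m.lt_succ_self
  | succ l hml ih =>
    have hl : u l = u m := by
      rw [ih (fun k hk hkl => hu k hk (by omega)) (fun k hk hkl => hid k hk (by omega)),
        hid l hml l.lt_succ_self, id]
    rw [hu l (by omega) l.lt_succ_self, hl]

variable {n : ℕ} [NeZero n] {F : Fin n → M → M} {a b : Fin n}

theorem round_eq_comp (hab : a ≠ b) (hid : ∀ i, i ≠ a → i ≠ b → F i = id) {m : ℕ}
    (hm : (m : Fin n) = b)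
    (hu : ∀ k, m ≤ k → k < m + n → u (k + 1) = F ((k + 1 : ℕ) : Fin n) (u k)) :
    u (m + n) = (F b ∘ F a) (u m) := by
  obtain ⟨r, hmr, hrm, rfl⟩ := exists_between_natCast_eq a m
  have hmr : m < r := hmr.lt_of_ne (by rintro rfl; exact hab hm)
  subst hm
  have hid' : ∀ k, m < k → k < m + n → k ≠ r → F (k : Fin n) = id := by
    intro k hmk hkm hkr
    refine hid k ?_ (natCast_ne_natCast_of_lt hmk hkm)
    rcases hkr.lt_or_gt with hlt | hgt
    · exact (natCast_ne_natCast_of_lt hlt (by omega)).symm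
    · exact natCast_ne_natCast_of_lt hgt (by omega)
  have hfirst : u r = F r (u m) :=
    eq_apply_of_forall_between_eq_id (F := fun k => F k) hmr (fun k hk hkr => hu k hk (by omega))
      fun k hmk hkr => hid' k hmk (by omega) hkr.ne
  have hsecond : u (m + n) = F ((m + n : ℕ) : Fin n) (u r) :=
    eq_apply_of_forall_between_eq_id (F := fun k => F k) hrm (fun k hk hkm => hu k (by omega) hkm)
      fun k hrk hkm => hid' k (by omega) hkm hrk.ne'
  rw [hsecond, hfirst, natCast_add_period, Function.comp_apply]

theorem rounds_eq_iterate_comp (hab : a ≠ b) (hid : ∀ i, i ≠ a → i ≠ b → F i = id) {m : ℕ}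
    (hm : (m : Fin n) = b) (j : ℕ)
    (hu : ∀ k, m ≤ k → k < m + n * j → u (k + 1) = F ((k + 1 : ℕ) : Fin n) (u k)) :
    u (m + n * j) = (F b ∘ F a)^[j] (u m) := by
  induction j with
  | zero => rfl
  | succ j ih =>
    have hj : ((m + n * j : ℕ) : Fin n) = b := by
      rw [Nat.cast_add, Nat.cast_mul, Fin.natCast_self, zero_mul, add_zero, hm]
    rw [Nat.mul_succ, ← Nat.add_assoc] at hu ⊢
    rw [round_eq_comp hab hid hj fun k hk hkm => hu k (by omega) hkm,
      ih fun k hk hkm => hu k hk (by omega), Function.iterate_succ_apply']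

theorem exists_add_period_eq_of_two_ne_id {ya yb : M} (hab : a ≠ b)
    (hid : ∀ i, i ≠ a → i ≠ b → F i = id) (ha : ∀ x, F a x = x ∨ F a x = ya)
    (hb : ∀ x, F b x = x ∨ F b x = yb)
    (hu : ∀ t : ℕ, u (t + n) = u t ∨ u (t + n) = F t (u (t + n - 1))) :
    ∃ t, n ≤ t ∧ t < 5 * n ∧ u (t + n) = u t := by
  by_contra! hmove
  have hstep : ∀ k, 2 * n ≤ k → k + 1 < 6 * n → u (k + 1) = F ((k + 1 : ℕ) : Fin n) (u k) := by
    intro k hk hkn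
    obtain ⟨t, ht⟩ := Nat.exists_eq_add_of_le' (by omega : n ≤ k + 1)
    rw [ht, natCast_add_period, (hu t).resolve_left (hmove t (by omega) (by omega))]
    congr 2
    omega
  obtain ⟨m, hm, hmn, hmb⟩ := exists_between_natCast_eq b (2 * n)
  have hrounds : ∀ j ≤ 3, u (m + n * j) = (F b ∘ F a)^[j] (u m) := fun j hj => by
    have := Nat.mul_le_mul_left n hj
    exact rounds_eq_iterate_comp hab hid hmb j fun k hk hkm => hstep k (by omega) (by omega)
  apply hmove (m + n * 2) (by omega) (by omega)
  calc u (m + n * 2 + n) = u (m + n * 3) := by rw [Nat.add_assoc, ← Nat.mul_succ]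
    _ = (F b ∘ F a)^[3] (u m) := hrounds 3 le_rfl
    _ = (F b ∘ F a)^[2] (u m) := iterate_three_comp_eq_iterate_two ha hb _
    _ = u (m + n * 2) := (hrounds 2 (by norm_num)).symm

end TravellingColour

section CycleGame

variable {n : ℕ} [NeZero n] {M : Type} {w : Fin n → Fin n → ℝ} {β : Fin n → M → ℕ}
  {C : Fin n → Finset M} {s : Fin n → M}

theorem cycAdj_iff {i j : Fin n} : cycAdj n j i ↔ j = i - 1 := by
  rw [eq_sub_iff_add_eq, Fin.ext_iff, Fin.val_add, cycAdj, Fin.val_one', Nat.add_mod_mod]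

theorem sub_one_ne_self (hn : 2 ≤ n) (i : Fin n) : i - 1 ≠ i := by
  have : Nontrivial (Fin n) := Fin.nontrivial_iff_two_le.2 hn
  exact sub_eq_self.not.2 one_ne_zero

theorem payoff_cycAdj (i : Fin n) : payoff (cycAdj n) w β s i =
    responsePayoff (w (i - 1) i) (fun c => (β i c : ℝ)) (s (i - 1)) (s i) := by
  simp only [payoff, responsePayoff, cycAdj_iff, Finset.sum_filter, ite_and,
    Finset.sum_ite_eq', Finset.mem_univ, if_true]

theorem payoff_cycAdj_update (hn : 2 ≤ n) (i : Fin n) (c : M) :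
    payoff (cycAdj n) w β (Function.update s i c) i =
      responsePayoff (w (i - 1) i) (fun c => (β i c : ℝ)) (s (i - 1)) c := by
  rw [payoff_cycAdj, Function.update_self, Function.update_of_ne (sub_one_ne_self hn i)]

theorem isNash_of_forall_isBestResponse (hn : 2 ≤ n)
    (h : ∀ i, IsBestResponse (w (i - 1) i) (fun c => (β i c : ℝ)) (C i) (s (i - 1)) (s i)) :
    IsNash (cycAdj n) w β C s := by
  refine isNash_of_forall_payoff_update_le (fun i => (h i).1) fun i c hc => ?_
  rw [payoff_cycAdj_update hn, payoff_cycAdj]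
  exact (h i).2 c hc

/-- The response function of the nodes of the cycle game, each playing `lazyResponse` with the
fallback colours `y`. -/
noncomputable def cycleResponse (w : Fin n → Fin n → ℝ) (β : Fin n → M → ℕ) (C : Fin n → Finset M)
    (y : Fin n → M) (i : Fin n) : M → M → M :=
  lazyResponse (w (i - 1) i) (fun c => (β i c : ℝ)) (C i) (y i)

variable {y : Fin n → M}

theorem isBestResponse_cycleResponse (hw : ∀ i j, cycAdj n i j → 0 ≤ w i j)
    (hyC : ∀ i, y i ∈ C i) (hyβ : ∀ i, ∀ z ∈ C i, β i z ≤ β i (y i)) (i : Fin n) (x c : M) :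
    IsBestResponse (w (i - 1) i) (fun c => (β i c : ℝ)) (C i) x (cycleResponse w β C y i x c) :=
  isBestResponse_lazyResponse (hw _ _ (cycAdj_iff.2 rfl)) (hyC i)
    fun z hz => Nat.cast_le.2 (hyβ i z hz)

theorem update_cycleResponse_eq_or_uniDev (hn : 2 ≤ n) (hw : ∀ i j, cycAdj n i j → 0 ≤ w i j)
    (hyC : ∀ i, y i ∈ C i) (hyβ : ∀ i, ∀ z ∈ C i, β i z ≤ β i (y i)) (hs : Valid C s)
    (i : Fin n) :
    Function.update s i (cycleResponse w β C y i (s (i - 1)) (s i)) = s ∨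
      UniDev (cycAdj n) w β C s
        (Function.update s i (cycleResponse w β C y i (s (i - 1)) (s i))) := by
  by_cases hstay : cycleResponse w β C y i (s (i - 1)) (s i) = s i
  · exact .inl (by rw [hstay, Function.update_eq_self])
  · refine .inr (uniDev_update hs (isBestResponse_cycleResponse hw hyC hyβ i _ _).1 ?_)
    rw [payoff_cycAdj_update hn, payoff_cycAdj]
    exact responsePayoff_lt_lazyResponse (hw _ _ (cycAdj_iff.2 rfl)) (hyC i)
      (fun z hz => Nat.cast_le.2 (hyβ i z hz)) (hs i) hstay

theorem valid_roundRobin {R : Fin n → M → M → M} (hR : ∀ i x c, R i x c ∈ C i) (hs : Valid C s)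
    (t : ℕ) : Valid C (roundRobin R s t) := by
  induction t with
  | zero => exact hs
  | succ t ih =>
    exact (Function.forall_update_iff _ fun j d => d ∈ C j).2 ⟨hR _ _ _, fun j _ => ih j⟩

theorem exists_turnColour_cycleResponse_eq (hw : ∀ i j, cycAdj n i j → 0 ≤ w i j)
    (hyC : ∀ i, y i ∈ C i) (hyβ : ∀ i, ∀ z ∈ C i, β i z ≤ β i (y i)) {a b : Fin n} (hab : a ≠ b)
    (hβ : ∀ i, i ≠ a → i ≠ b → ∀ c ∈ C i, ∀ c' ∈ C i, β i c = β i c') (hs : Valid C s) :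
    ∃ t, n ≤ t ∧ t < 5 * n ∧ turnColour (cycleResponse w β C y) s (t + n) =
      turnColour (cycleResponse w β C y) s t := by
  let copy : Fin n → M → M :=
    fun i => copyOrDefault (w (i - 1) i) (fun c => (β i c : ℝ)) (C i) (y i)
  have hcopy : ∀ i x, copy i x = x ∨ copy i x = y i := fun i x => copyOrDefault_eq_or
  let F : Fin n → M → M := fun i => if i = a ∨ i = b then copy i else id
  have hF : ∀ i, i = a ∨ i = b → F i = copy i := fun i hi => if_pos hi
  have hid : ∀ i, i ≠ a → i ≠ b → F i = id := fun i hia hib => if_neg (not_or.2 ⟨hia, hib⟩)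
  refine exists_add_period_eq_of_two_ne_id (F := F) hab hid
    (fun x => hF a (.inl rfl) ▸ hcopy a x) (fun x => hF b (.inr rfl) ▸ hcopy b x) fun t => ?_
  rw [turnColour_add]
  by_cases hi : (t : Fin n) = a ∨ (t : Fin n) = b
  · rw [hF _ hi]
    exact lazyResponse_eq_or
  · obtain ⟨hia, hib⟩ := not_or.1 hi
    rw [hid _ hia hib]
    have hmem : turnColour (cycleResponse w β C y) s t ∈ C (t : Fin n) :=
      valid_roundRobin (fun i x c => (isBestResponse_cycleResponse hw hyC hyβ i x c).1) hs t t
    exact lazyResponse_eq_or_of_constant_bonus (hw _ _ (cycAdj_iff.2 rfl))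
      (fun c hc c' hc' => congrArg Nat.cast (hβ _ hia hib c hc c' hc')) hmem

end CycleGame

theorem weighted_cycle_two_bonuses_improvement_path_general {n : ℕ} (hn : 2 ≤ n) {M : Type}
    {w : Fin n → Fin n → ℝ} (hw : ∀ i j, cycAdj n i j → 0 ≤ w i j) {β : Fin n → M → ℕ}
    {C : Fin n → Finset M} {a b : Fin n}
    (hβ : ∀ i, i ≠ a → i ≠ b → ∀ c ∈ C i, ∀ c' ∈ C i, β i c = β i c')
    {s : Fin n → M} (hs : Valid C s) :
    ∃ L, L ≤ 5 * n ∧ ImpPath (cycAdj n) w β C s L := by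
  have : NeZero n := ⟨by omega⟩
  wlog hab : a ≠ b generalizing a
  · obtain rfl := not_ne_iff.1 hab
    exact this (fun i _ hib => hβ i hib hib) (sub_one_ne_self hn a)
  choose y hyC hyβ using fun i => (C i).exists_max_image (β i) ⟨s i, hs i⟩
  have hbest := isBestResponse_cycleResponse hw hyC hyβ
  obtain ⟨t, hnt, htn, ht⟩ := exists_turnColour_cycleResponse_eq hw hyC hyβ hab hβ hs
  have hNash : IsNash (cycAdj n) w β C (roundRobin (cycleResponse w β C y) s t) :=
    isNash_of_forall_isBestResponse hn (roundRobin_of_turnColour_add_eq hbest hnt ht)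
  have hvalid := valid_roundRobin (fun i x c => (hbest i x c).1) hs
  obtain ⟨L, hLt, hpath⟩ := exists_impPath_of_lazy_sequence t _
    (fun r => update_cycleResponse_eq_or_uniDev hn hw hyC hyβ (hvalid r) r) hNash
  exact ⟨L, hLt.trans htn.le, hpath⟩

/-- There is a constant `c` such that every coordination game on a weighted
simple cycle on `n` nodes in which at most two nodes have a non-zero bonus
admits, from every joint strategy, a finite improvement path of length at most
`c * n` ending in a Nash equilibrium. -/
theorem weighted_cycle_two_bonuses_improvement_path :
    ∃ c : ℕ,
      ∀ (n : ℕ), 2 ≤ n →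
      ∀ (M : Type) [Fintype M],
      ∀ (w : Fin n → Fin n → ℝ), (∀ i j, cycAdj n i j → 0 ≤ w i j) →
      ∀ (β : Fin n → M → ℕ),
        (∃ a b : Fin n, ∀ i, (∃ col, β i col ≠ 0) → i = a ∨ i = b) →
      ∀ (C : Fin n → Finset M), (∀ i, (C i).Nonempty) →
      ∀ s : Fin n → M, Valid C s →
        ∃ L, L ≤ c * n ∧ ImpPath (cycAdj n) w β C s L := by
  refine ⟨5, fun n hn M _ w hw β ⟨a, b, hβ⟩ C _ s hs => ?_⟩
  have hzero : ∀ i, i ≠ a → i ≠ b → ∀ c, β i c = 0 := fun i hia hib c =>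
    not_ne_iff.1 fun hc => (hβ i ⟨c, hc⟩).elim hia hib
  exact weighted_cycle_two_bonuses_improvement_path_general hn hw
    (fun i hia hib c _ c' _ => (hzero i hia hib c).trans (hzero i hia hib c').symm) hs

end CG
end

section
/- In a coordination game on a weighted simple cycle with bonuses, every Nash equilibrium s satisfies: either s is a strong equilibrium, or there exists a single profitable coalition deviation from s whose resulting joint strategy is a strong equilibrium. Consequently, any finite improvement path can be extended to a finite c-improvement path by appending at most one profitable coalition deviation step at its end. -/
open scoped Classical

namespace CG

/-!
Against a Nash equilibrium `s`, a member `i` of a profitable coalition must be joined in its new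
colour by an in-neighbour that has just switched to that colour: otherwise `i` could switch alone.
When the in-neighbour is unique and the graph is strongly connected, this spreads along the whole
graph, so a profitable coalition deviation from a Nash equilibrium moves *all* nodes to one common
colour. The resulting monochromatic strategy is again a Nash equilibrium, since leaving the common
colour alone gives no more than what `s` already guaranteed. So a further profitable deviation would
again improve every node, and the two steps would compose to one from `s`; a profitable deviation
from `s` that is best for one fixed node therefore ends in a strong equilibrium.
-/

section Graph

variable {V M : Type} [Fintype V] {adj : V → V → Prop} {w : V → V → ℝ} {β : V → M → ℕ}
  {C : V → Finset M} {s s' : V → M} {i : V}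

lemma payoff_le_payoff (hw : ∀ j, adj j i → 0 ≤ w j i) (hi : s i = s' i)
    (hsub : ∀ j, adj j i → s j = s i → s' j = s' i) :
    payoff adj w β s i ≤ payoff adj w β s' i := by
  unfold payoff
  rw [hi]
  gcongr ?_ + _
  refine Finset.sum_le_sum_of_subset_of_nonneg ?_ ?_
  · exact Finset.monotone_filter_right _ fun j _ ⟨hj, hsj⟩ => ⟨hj, hsub j hj (hsj.trans hi.symm)⟩
  · exact fun j hj _ => hw j (Finset.mem_filter.mp hj).2.1

lemma profDev_of_forall_payoff_lt [Nonempty V] (hvalid : Valid C s')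
    (hlt : ∀ i, payoff adj w β s i < payoff adj w β s' i) : ProfDev adj w β C s s' := by
  refine ⟨hvalid, ?_, fun i _ => hlt i⟩
  rintro rfl
  exact (hlt (Classical.arbitrary V)).false

lemma IsNash.payoff_update_le (hs : IsNash adj w β C s) {c : M} (hc : c ∈ C i) :
    payoff adj w β (Function.update s i c) i ≤ payoff adj w β s i := by
  by_contra! hlt
  refine hs.2 (Function.update s i c) ⟨⟨?_, ?_, ?_⟩, i, ?_⟩
  · exact (Function.forall_update_iff s fun j d => d ∈ C j).mpr ⟨hc, fun j _ => hs.1 j⟩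
  · intro heq
    rw [← heq] at hlt
    exact hlt.false
  · intro j hj
    obtain rfl : j = i := by
      by_contra hji
      exact hj (Function.update_of_ne hji c s).symm
    exact hlt
  · exact fun j hji => (Function.update_of_ne hji c s).symm

lemma IsNash.exists_adj_of_profDev (hw : ∀ j, adj j i → 0 ≤ w j i) (hs : IsNash adj w β C s)
    (hdev : ProfDev adj w β C s s') (hi : s i ≠ s' i) :
    ∃ j, adj j i ∧ s j ≠ s' j ∧ s' j = s' i := by
  by_contra! hstay
  have hle : payoff adj w β s' i ≤ payoff adj w β (Function.update s i (s' i)) i := by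
    refine payoff_le_payoff hw (Function.update_self i _ s).symm fun j hj hs'j => ?_
    rw [Function.update_self]
    rcases eq_or_ne j i with rfl | hji
    · exact Function.update_self ..
    · rw [Function.update_of_ne hji, ← hs'j]
      by_contra hsj
      exact hstay j hj hsj hs'j
  exact (hdev.2.2 i hi).not_ge (hle.trans (hs.payoff_update_le (hdev.1 i)))

lemma IsNash.eq_const_of_profDev (hin : Relator.LeftUnique adj)
    (hconn : ∀ i j, Relation.ReflTransGen adj i j) (hw : ∀ i j, adj i j → 0 ≤ w i j)
    (hs : IsNash adj w β C s) (hdev : ProfDev adj w β C s s') :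
    (∃ c, s' = Function.const V c) ∧ ∀ i, s i ≠ s' i := by
  obtain ⟨k, hk⟩ := Function.ne_iff.mp hdev.2.1
  have hall (i : V) : s i ≠ s' i ∧ s' i = s' k := by
    induction hconn i k using Relation.ReflTransGen.head_induction_on with
    | refl => exact ⟨hk, rfl⟩
    | head hadj _ ih =>
      obtain ⟨j, hj, hsj, hs'j⟩ := hs.exists_adj_of_profDev (hw · _) hdev ih.1
      obtain rfl := hin hadj hj
      exact ⟨hsj, hs'j.trans ih.2⟩
  exact ⟨⟨s' k, funext fun i => (hall i).2⟩, fun i => (hall i).1⟩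

lemma IsNash.const_of_payoff_le (hw : ∀ i j, adj i j → 0 ≤ w i j) (hs : IsNash adj w β C s)
    {c : M} (hvalid : Valid C (Function.const V c))
    (hle : ∀ i, payoff adj w β s i ≤ payoff adj w β (Function.const V c) i) :
    IsNash adj w β C (Function.const V c) := by
  refine ⟨hvalid, ?_⟩
  rintro t ⟨⟨htvalid, hne, hlt⟩, i, hothers⟩
  have hi : c ≠ t i := by
    intro hi
    refine hne (funext fun j => ?_)
    rcases eq_or_ne j i with rfl | hji
    exacts [hi, hothers j hji]
  -- In `t` no other node shares the colour of `i`, so `i` earns no more than by the same switch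
  -- from `s`.
  have hupdate : payoff adj w β t i ≤ payoff adj w β (Function.update s i (t i)) i := by
    refine payoff_le_payoff (hw · i) (Function.update_self i _ s).symm fun j _ htj => ?_
    obtain rfl : j = i := by
      by_contra hji
      exact hi ((hothers j hji).trans htj)
    rfl
  exact (hlt i hi).not_ge ((hupdate.trans (hs.payoff_update_le (htvalid i))).trans (hle i))

lemma exists_profDev_forall_payoff_le (hdev : ProfDev adj w β C s s') (i : V) :
    ∃ t, ProfDev adj w β C s t ∧
      ∀ u, ProfDev adj w β C s u → payoff adj w β u i ≤ payoff adj w β t i := by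
  have hfin : {t | ProfDev adj w β C s t}.Finite :=
    (Fintype.piFinset C).finite_toSet.subset fun t ht => Fintype.coe_piFinset C ▸ fun j _ => ht.1 j
  exact Set.exists_max_image _ (payoff adj w β · i) hfin ⟨s', hdev⟩

theorem IsNash.isStrong_or_exists_profDev_isStrong (hin : Relator.LeftUnique adj)
    (hconn : ∀ i j, Relation.ReflTransGen adj i j) (hw : ∀ i j, adj i j → 0 ≤ w i j)
    (hs : IsNash adj w β C s) :
    IsStrong adj w β C s ∨ ∃ s', ProfDev adj w β C s s' ∧ IsStrong adj w β C s' := by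
  refine or_iff_not_imp_left.mpr fun hstrong => ?_
  obtain ⟨s₁, hs₁⟩ : ∃ s₁, ProfDev adj w β C s s₁ := by
    by_contra! hnone
    exact hstrong ⟨hs.1, hnone⟩
  obtain ⟨k, -⟩ := Function.ne_iff.mp hs₁.2.1
  have : Nonempty V := ⟨k⟩
  obtain ⟨s', hs', hmax⟩ := exists_profDev_forall_payoff_le hs₁ k
  obtain ⟨⟨c, rfl⟩, hne⟩ := hs.eq_const_of_profDev hin hconn hw hs'
  have hlt (i : V) : payoff adj w β s i < payoff adj w β (Function.const V c) i :=
    hs'.2.2 i (hne i)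
  have hnash := hs.const_of_payoff_le hw hs'.1 fun i => (hlt i).le
  refine ⟨_, hs', hs'.1, fun t ht => ?_⟩
  have hltt (i : V) : payoff adj w β (Function.const V c) i < payoff adj w β t i :=
    ht.2.2 i ((hnash.eq_const_of_profDev hin hconn hw ht).2 i)
  have hst := profDev_of_forall_payoff_lt ht.1 fun i => (hlt i).trans (hltt i)
  exact (hltt k).not_ge (hmax t hst)

lemma ImpPath.exists_cImpPath
    (hstep : ∀ s, IsNash adj w β C s →
      IsStrong adj w β C s ∨ ∃ s', ProfDev adj w β C s s' ∧ IsStrong adj w β C s')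
    {L : ℕ} (hpath : ImpPath adj w β C s L) :
    ∃ L', L' ≤ L + 1 ∧ CImpPath adj w β C s L' := by
  obtain ⟨σ, hstart, hσ, hnash⟩ := hpath
  rcases hstep _ hnash with hstrong | ⟨s', hdev, hstrong⟩
  · exact ⟨L, L.le_succ, σ, hstart, fun t ht => (hσ t ht).1, hstrong⟩
  · refine ⟨L + 1, le_rfl, Function.update σ (L + 1) s', ?_, fun t ht => ?_, ?_⟩
    · rwa [Function.update_of_ne L.succ_ne_zero.symm]
    · rw [Function.update_of_ne ht.ne]
      rcases (Nat.lt_succ_iff.mp ht).lt_or_eq with htL | rfl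
      · rw [Function.update_of_ne (Nat.succ_lt_succ htL).ne]
        exact (hσ t htL).1
      · rwa [Function.update_self]
    · rwa [Function.update_self]

end Graph

lemma cycAdj_leftUnique (n : ℕ) : Relator.LeftUnique (cycAdj n) := fun i j _ hi hj =>
  Fin.ext <| (Nat.ModEq.add_right_cancel' 1 (hi.trans hj.symm)).eq_of_lt_of_lt i.isLt j.isLt

lemma cycAdj_reflTransGen {n : ℕ} (i j : Fin n) : Relation.ReflTransGen (cycAdj n) i j := by
  have hwalk (k : ℕ) (j : Fin n) (hj : (i.val + k) % n = j.val) :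
      Relation.ReflTransGen (cycAdj n) i j := by
    induction k generalizing j with
    | zero =>
      obtain rfl : i = j := Fin.ext ((Nat.mod_eq_of_lt i.isLt).symm.trans hj)
      exact .refl
    | succ k ih =>
      refine (ih ⟨(i + k) % n, Nat.mod_lt _ i.pos⟩ rfl).tail ?_
      exact (Nat.mod_add_mod _ n 1).trans hj
  refine hwalk (n - i + j) j ?_
  rw [← add_assoc, Nat.add_sub_of_le i.isLt.le, Nat.add_mod_left, Nat.mod_eq_of_lt j.isLt]

theorem cycle_nash_one_coalition_step_to_strong_general {V M : Type} [Fintype V]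
    {adj : V → V → Prop} (hin : Relator.LeftUnique adj)
    (hconn : ∀ i j, Relation.ReflTransGen adj i j)
    (w : V → V → ℝ) (hw : ∀ i j, adj i j → 0 ≤ w i j) (β : V → M → ℕ) (C : V → Finset M) :
    (∀ s : V → M, IsNash adj w β C s →
        IsStrong adj w β C s ∨
        ∃ s', ProfDev adj w β C s s' ∧ IsStrong adj w β C s') ∧
    (∀ (s : V → M) (L : ℕ), ImpPath adj w β C s L →
        ∃ L', L' ≤ L + 1 ∧ CImpPath adj w β C s L') :=
  have hstep (s : V → M) (hs : IsNash adj w β C s) :=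
    hs.isStrong_or_exists_profDev_isStrong hin hconn hw
  ⟨hstep, fun _ _ hpath => hpath.exists_cImpPath hstep⟩

/-- In a coordination game on a weighted simple cycle with bonuses, every Nash
equilibrium is a strong equilibrium or admits a single profitable coalition
deviation leading to a strong equilibrium; consequently every finite
improvement path extends to a finite c-improvement path by appending at most
one profitable coalition deviation step. -/
theorem cycle_nash_one_coalition_step_to_strong
    {n : ℕ} (hn : 2 ≤ n) {M : Type} [Fintype M]
    (w : Fin n → Fin n → ℝ) (hw : ∀ i j, cycAdj n i j → 0 ≤ w i j)
    (β : Fin n → M → ℕ)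
    (C : Fin n → Finset M) (hC : ∀ i, (C i).Nonempty) :
    (∀ s : Fin n → M, IsNash (cycAdj n) w β C s →
        IsStrong (cycAdj n) w β C s ∨
        ∃ s', ProfDev (cycAdj n) w β C s s' ∧ IsStrong (cycAdj n) w β C s') ∧
    (∀ (s : Fin n → M) (L : ℕ), ImpPath (cycAdj n) w β C s L →
        ∃ L', L' ≤ L + 1 ∧ CImpPath (cycAdj n) w β C s L') :=
  cycle_nash_one_coalition_step_to_strong_general (cycAdj_leftUnique n) cycAdj_reflTransGen w hw β C

end CG
end
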